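/- arXiv:0803.2960 — 2 statements merged into one kernel-verified Lean document; each statement's English description precedes it below -/
import Mathlib

section
/- Let n ≥ 1, let K be a field, and let S ⊆ [1,n] × [1,n] be an order ideal for the partial order (i,j) ≤ (r,s) ⟺ (i ≥ r and j ≤ s). Then 𝔟[S] is invariant under conjugation by the Borel subgroup of upper triangular matrices: for every invertible upper triangular n × n matrix b over K and every X ∈ 𝔟[S], the matrix b X b⁻¹ again lies in 𝔟[S]. -/
/-- 𝔟[S] is invariant under conjugation by the Borel of upper triangular matrices:
for an order ideal `S` (for the order `(i,j) ≤ (r,s) ↔ i ≥ r ∧ j ≤ s`),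
if `b` is an invertible upper triangular matrix and `X` is upper triangular vanishing
on `S`, then `b * X * b⁻¹` is again upper triangular and vanishes on `S`. -/
theorem stmt1 (n : ℕ) (hn : 1 ≤ n) (K : Type*) [Field K]
    (S : Set (Fin n × Fin n))
    (hS : ∀ r s i j : Fin n, (r, s) ∈ S → r ≤ i → j ≤ s → (i, j) ∈ S)
    (b : Matrix (Fin n) (Fin n) K) (hb : IsUnit b)
    (hbu : ∀ i j : Fin n, j < i → b i j = 0)
    (X : Matrix (Fin n) (Fin n) K)
    (hX : ∀ i j : Fin n, j < i → X i j = 0)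
    (hXS : ∀ i j : Fin n, (i, j) ∈ S → X i j = 0) :
    (∀ i j : Fin n, j < i → (b * X * b⁻¹) i j = 0) ∧
    (∀ i j : Fin n, (i, j) ∈ S → (b * X * b⁻¹) i j = 0) := by
  have hinv : ∀ i j : Fin n, j < i → b⁻¹ i j = 0 := by
    have hB : Matrix.BlockTriangular b (id : Fin n → Fin n) := fun i j h => hbu i j h
    haveI : Invertible b := hb.invertible
    have h2 := Matrix.blockTriangular_inv_of_blockTriangular hB
    exact fun i j h => h2 h
  have key : ∀ T : Set (Fin n × Fin n),
      (∀ r s i j : Fin n, (r, s) ∈ T → r ≤ i → j ≤ s → (i, j) ∈ T) →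
      (∀ i j : Fin n, (i, j) ∈ T → X i j = 0) →
      ∀ i j : Fin n, (i, j) ∈ T → (b * X * b⁻¹) i j = 0 := by
    intro T hT hXT i j hij
    rw [Matrix.mul_apply]
    refine Finset.sum_eq_zero fun l _ => ?_
    rcases lt_or_ge j l with hl | hl
    · rw [hinv l j hl, mul_zero]
    · rw [Matrix.mul_apply, Finset.sum_eq_zero, zero_mul]
      intro k _
      rcases lt_or_ge k i with hk | hk
      · rw [hbu i k hk, zero_mul]
      · rw [hXT k l (hT i j k l hij hk hl), mul_zero]
  refine ⟨?_, key S hS hXS⟩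
  exact key {p | p.2 < p.1}
    (fun r s i j h h1 h2 => lt_of_le_of_lt h2 (lt_of_lt_of_le h h1)) hX
end

section
/- Let K be a field, let n ≥ 1 and 1 ≤ r ≤ n. Let g be an invertible lower triangular n × n matrix over K and let M be an n × n matrix over K such that the submatrix of M consisting of its first r rows has rank strictly less than r. Then the determinant of the top-left r × r block of g M g⁻¹ is zero: det((g M g⁻¹)_{≤r,≤r}) = 0. -/
/-- If `g` is an invertible lower triangular matrix and the first `r` rows of `M`
have rank `< r`, then the determinant of the top-left `r × r` block of
`g * M * g⁻¹` vanishes. -/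
theorem stmt7 (K : Type*) [Field K] (n r : ℕ) (hn : 1 ≤ n) (hr1 : 1 ≤ r) (hrn : r ≤ n)
    (g : Matrix (Fin n) (Fin n) K) (hg : IsUnit g)
    (hgl : ∀ i j : Fin n, i < j → g i j = 0)
    (M : Matrix (Fin n) (Fin n) K)
    (hM : (M.submatrix (Fin.castLE hrn) id).rank < r) :
    ((g * M * g⁻¹).submatrix (Fin.castLE hrn) (Fin.castLE hrn)).det = 0 := by
  by_contra hdet
  have hfac : (g * M * g⁻¹).submatrix (Fin.castLE hrn) (Fin.castLE hrn) =
      (g.submatrix (Fin.castLE hrn) (Fin.castLE hrn) * M.submatrix (Fin.castLE hrn) id) *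
        g⁻¹.submatrix id (Fin.castLE hrn) := by
    have h1 : (g * M).submatrix (Fin.castLE hrn) id =
        g.submatrix (Fin.castLE hrn) (Fin.castLE hrn) * M.submatrix (Fin.castLE hrn) id := by
      ext i j
      simp only [Matrix.submatrix_apply, Matrix.mul_apply, id]
      symm
      apply Fintype.sum_of_injective (Fin.castLE hrn) (Fin.castLE_injective hrn)
      · intro k hk
        have hlt : Fin.castLE hrn i < k := by
          by_contra hle
          apply hk
          have hki : (k : ℕ) ≤ i := by
            have := not_lt.mp hle
            simpa [Fin.le_def] using this
          exact ⟨⟨k, lt_of_le_of_lt hki i.2⟩, Fin.ext rfl⟩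
        rw [hgl _ _ hlt, zero_mul]
      · intro k
        rfl
    rw [← h1]
    rfl
  have hrank : ((g * M * g⁻¹).submatrix (Fin.castLE hrn) (Fin.castLE hrn)).rank = r := by
    rw [Matrix.rank_of_isUnit _ ((Matrix.isUnit_iff_isUnit_det _).2 (isUnit_iff_ne_zero.2 hdet)),
      Fintype.card_fin]
  rw [hfac] at hrank
  have h2 := (Matrix.rank_mul_le_left (g.submatrix (Fin.castLE hrn) (Fin.castLE hrn) *
    M.submatrix (Fin.castLE hrn) id) (g⁻¹.submatrix id (Fin.castLE hrn)))
  have h3 := Matrix.rank_mul_le_right (g.submatrix (Fin.castLE hrn) (Fin.castLE hrn))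
    (M.submatrix (Fin.castLE hrn) id)
  omega
end
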